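/- For every natural number n and every real x ≠ 0, the function K n satisfies the modified spherical Bessel differential equation: x² · (deriv (deriv (K n))) x + 2·x · (deriv (K n)) x - (x² + n·(n+1)) · K n x = 0. -/

import Mathlib

/-- The modified spherical Bessel functions of the second kind `k_n`, defined via
the closed forms of `k₀`, `k₁` and the standard recurrence. -/
noncomputable def K : ℕ → ℝ → ℝ
  | 0, x => Real.exp (-x) / x
  | 1, x => (1 / x ^ 2 + 1 / x) * Real.exp (-x)
  | (n + 2), x => K n x + ((2 * (n : ℝ) + 3) / x) * K (n + 1) x

/-!
The pair `(k_n, k_{n+1})` satisfies a first-order linear system with parameter `n`, and the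
three-term recurrence turns a solution of the system with parameter `ν` into one with parameter
`ν + 1`. Eliminating the second component of the system leaves the modified spherical Bessel
equation for the first.
-/

open Filter Topology

/-- The ladder relations `f' = (ν / x) f - g` and `g' = -f - ((ν + 2) / x) g` at the point `x`,
the first-order system satisfied by consecutive modified spherical Bessel functions `f = k_ν` and
`g = k_{ν+1}`. It is stated pointwise so that the singular point `x = 0` can be avoided. -/
structure IsModifiedSphericalBesselPairAt {𝕜 : Type*} [NontriviallyNormedField 𝕜]
    (ν : 𝕜) (f g : 𝕜 → 𝕜) (x : 𝕜) : Prop where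
  hasDerivAt_fst : HasDerivAt f (ν / x * f x - g x) x
  hasDerivAt_snd : HasDerivAt g (-f x - (ν + 2) / x * g x) x

section Ladder

variable {𝕜 : Type*} [NontriviallyNormedField 𝕜] {ν x : 𝕜} {f g : 𝕜 → 𝕜}

lemma hasDerivAt_const_div (c : 𝕜) (hx : x ≠ 0) :
    HasDerivAt (fun y ↦ c / y) (-c / x ^ 2) x := by
  simpa [div_eq_mul_inv] using (hasDerivAt_inv hx).const_mul c

namespace IsModifiedSphericalBesselPairAt

lemma raise (h : IsModifiedSphericalBesselPairAt ν f g x) (hx : x ≠ 0) :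
    IsModifiedSphericalBesselPairAt (ν + 1) g (fun y ↦ f y + (2 * ν + 3) / y * g y) x where
  hasDerivAt_fst := h.hasDerivAt_snd.congr_deriv <| by
    field_simp
    ring
  hasDerivAt_snd := by
    refine (h.hasDerivAt_fst.fun_add
      ((hasDerivAt_const_div (2 * ν + 3) hx).fun_mul h.hasDerivAt_snd)).congr_deriv ?_
    field_simp
    ring

lemma hasDerivAt_deriv_fst (h : ∀ᶠ y in 𝓝 x, IsModifiedSphericalBesselPairAt ν f g y)
    (hx : x ≠ 0) :
    HasDerivAt (deriv f) ((1 + ν * (ν - 1) / x ^ 2) * f x + 2 / x * g x) x := by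
  have hderiv : deriv f =ᶠ[𝓝 x] fun y ↦ ν / y * f y - g y :=
    h.mono fun _ hy ↦ hy.hasDerivAt_fst.deriv
  obtain ⟨hf, hg⟩ := h.self_of_nhds
  refine HasDerivAt.congr_of_eventuallyEq ?_ hderiv
  refine (((hasDerivAt_const_div ν hx).fun_mul hf).fun_sub hg).congr_deriv ?_
  field_simp
  ring

theorem modified_spherical_bessel_ODE (h : ∀ᶠ y in 𝓝 x, IsModifiedSphericalBesselPairAt ν f g y)
    (hx : x ≠ 0) :
    x ^ 2 * deriv (deriv f) x + 2 * x * deriv f x - (x ^ 2 + ν * (ν + 1)) * f x = 0 := by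
  rw [(hasDerivAt_deriv_fst h hx).deriv, h.self_of_nhds.hasDerivAt_fst.deriv]
  field_simp
  ring

end IsModifiedSphericalBesselPairAt

end Ladder

lemma K_zero : K 0 = fun x ↦ Real.exp (-x) / x := by
  funext x
  rw [K]

lemma K_one : K 1 = fun x ↦ (1 / x ^ 2 + 1 / x) * Real.exp (-x) := by
  funext x
  rw [K]

lemma K_add_two (n : ℕ) :
    K (n + 2) = fun x ↦ K n x + (2 * (n : ℝ) + 3) / x * K (n + 1) x := by
  funext x
  rw [K]

lemma hasDerivAt_exp_neg (x : ℝ) :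
    HasDerivAt (fun y ↦ Real.exp (-y)) (-Real.exp (-x)) x := by
  simpa using (hasDerivAt_neg x).exp

lemma isModifiedSphericalBesselPairAt_K_zero {x : ℝ} (hx : x ≠ 0) :
    IsModifiedSphericalBesselPairAt 0 (K 0) (K 1) x where
  hasDerivAt_fst := by
    rw [K_zero, K_one]
    refine ((hasDerivAt_exp_neg x).fun_div (hasDerivAt_id' x) hx).congr_deriv ?_
    field_simp
    ring
  hasDerivAt_snd := by
    have hcoeff : HasDerivAt (fun y : ℝ ↦ 1 / y ^ 2 + 1 / y) (-2 / x ^ 3 - 1 / x ^ 2) x := by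
      refine (((hasDerivAt_const x 1).fun_div (hasDerivAt_pow 2 x) (pow_ne_zero 2 hx)).fun_add
        (hasDerivAt_const_div 1 hx)).congr_deriv ?_
      field_simp
      ring
    rw [K_zero, K_one]
    refine (hcoeff.fun_mul (hasDerivAt_exp_neg x)).congr_deriv ?_
    field_simp
    ring

theorem isModifiedSphericalBesselPairAt_K (n : ℕ) {x : ℝ} (hx : x ≠ 0) :
    IsModifiedSphericalBesselPairAt (n : ℝ) (K n) (K (n + 1)) x := by
  induction n with
  | zero => simpa using isModifiedSphericalBesselPairAt_K_zero hx
  | succ n ih => simpa only [K_add_two, Nat.cast_succ] using ih.raise hx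

/-- For every natural number `n` and every real `x ≠ 0`, `K n` satisfies the
modified spherical Bessel differential equation
`x² y'' + 2 x y' - (x² + n(n+1)) y = 0`. -/
theorem K_satisfies_modified_spherical_bessel_ODE (n : ℕ) (x : ℝ) (hx : x ≠ 0) :
    x ^ 2 * (deriv (deriv (K n))) x + 2 * x * (deriv (K n)) x -
      (x ^ 2 + (n : ℝ) * ((n : ℝ) + 1)) * K n x = 0 := by
  have hpair : ∀ᶠ y in 𝓝 x, IsModifiedSphericalBesselPairAt (n : ℝ) (K n) (K (n + 1)) y :=
    (eventually_ne_nhds hx).mono fun _ hy ↦ isModifiedSphericalBesselPairAt_K n hy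
  exact IsModifiedSphericalBesselPairAt.modified_spherical_bessel_ODE hpair hx
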